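/- arXiv:1303.4448 — 2 statements merged into one kernel-verified Lean document; each statement's English description precedes it below -/
import Mathlib

section
/- For all N-bit binary numbers x and y, every m ≥ 0, and every position i, the m-truncated carry bit is dominated by the true carry bit: if c_i^{(m)}(x,y) = 1 then c_i(x,y) = 1. -/
/-- The `i`-th binary digit of `x`. -/
def bitd (x i : ℕ) : ℕ := (x / 2 ^ i) % 2

/-- The carry array of ordinary addition: `carry x y 0 = 0` and
`carry x y (i+1) = 1` iff `x_i + y_i + carry x y i ∈ {2,3}`. -/
def carry (x y : ℕ) : ℕ → ℕ
  | 0 => 0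
  | i + 1 => if 2 ≤ bitd x i + bitd y i + carry x y i then 1 else 0

open Classical in
/-- The `m`-truncated carry bit at position `i`: it is 1 iff there is
`i - m ≤ j < i` with `(x_j, y_j) = (1,1)` and `x_k + y_k = 1` for all `j < k < i`. -/
noncomputable def tcarry (m x y i : ℕ) : ℕ :=
  if ∃ j, i - m ≤ j ∧ j < i ∧ bitd x j = 1 ∧ bitd y j = 1 ∧
      (∀ k, j < k → k < i → bitd x k + bitd y k = 1) then 1 else 0

section Carry

variable {m x y i j : ℕ}

lemma carry_succ_eq_one_iff :
    carry x y (i + 1) = 1 ↔ 2 ≤ bitd x i + bitd y i + carry x y i :=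
  one_ne_zero.ite_eq_left_iff

lemma carry_succ_eq_one_of_two_le (h : 2 ≤ bitd x i + bitd y i) : carry x y (i + 1) = 1 :=
  carry_succ_eq_one_iff.2 (Nat.le_add_right_of_le h)

lemma carry_succ_eq_one_of_carry_eq_one (hc : carry x y i = 1) (h : 1 ≤ bitd x i + bitd y i) :
    carry x y (i + 1) = 1 :=
  carry_succ_eq_one_iff.2 (Nat.add_le_add h hc.ge)

lemma carry_eq_one_of_forall_one_le (hji : j ≤ i) (hc : carry x y j = 1)
    (h : ∀ k, j ≤ k → k < i → 1 ≤ bitd x k + bitd y k) : carry x y i = 1 := by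
  induction i, hji using Nat.le_induction with
  | base => exact hc
  | succ i hji ih =>
    have hci : carry x y i = 1 := ih fun k hjk hki ↦ h k hjk (Nat.lt_succ_of_lt hki)
    exact carry_succ_eq_one_of_carry_eq_one hci (h i hji i.lt_succ_self)

lemma tcarry_eq_one_iff :
    tcarry m x y i = 1 ↔ ∃ j, i - m ≤ j ∧ j < i ∧ bitd x j = 1 ∧ bitd y j = 1 ∧
      ∀ k, j < k → k < i → bitd x k + bitd y k = 1 := by
  simp [tcarry]

end Carry

/-- the `m`-truncated carry bit is dominated by the true carry bit. -/
theorem tcarry_le_carry (N m x y i : ℕ) (hx : x < 2 ^ N) (hy : y < 2 ^ N) :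
    tcarry m x y i = 1 → carry x y i = 1 := by
  intro h
  obtain ⟨j, -, hji, hxj, hyj, hprop⟩ := tcarry_eq_one_iff.1 h
  have hgen : carry x y (j + 1) = 1 := carry_succ_eq_one_of_two_le (by rw [hxj, hyj])
  exact carry_eq_one_of_forall_one_le hji hgen fun k hjk hki ↦ (hprop k hjk hki).ge
end

section
/- For every N ≥ 1 and integers 0 ≤ m ≤ m', the number of pairs (x, y) of N-bit binary numbers with x +_m y ≡ x + y (mod 2^N) is at most the number of pairs with x +_{m'} y ≡ x + y (mod 2^N); hence the agreement probability π_m(N) is nondecreasing in m. -/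
/-- The `m`-truncated addition of `N`-bit numbers: the bitwise xor of `x`, `y`
and the truncated carry array. -/
noncomputable def tadd (N m x y : ℕ) : ℕ :=
  ∑ i ∈ Finset.range N, ((bitd x i + bitd y i + tcarry m x y i) % 2) * 2 ^ i

/-!
The untruncated carry into position `i` is `tcarry i x y i`, because the lower bound `i - i = 0` on
`j` is vacuous. It obeys the generate-or-propagate recurrence, hence equals the arithmetic carry of
`x % 2 ^ i + y % 2 ^ i`, and so xor-ing it into the digits of `x` and `y` gives the digits of
`x + y`. By uniqueness of binary digits, `m`-truncated addition is correct exactly when no carry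
into a position `i < N` is lost by truncation. Truncated carries increase with `m` towards the
untruncated ones, so no carry is lost for `m' ≥ m` if none is lost for `m`.
-/

theorem mod_pow_div_pow_mod {b i n : ℕ} (hi : i < n) (z : ℕ) :
    z % b ^ n / b ^ i % b = z / b ^ i % b := by
  obtain ⟨k, rfl⟩ := Nat.exists_eq_add_of_lt hi
  rw [add_assoc, pow_add, Nat.mod_mul_right_div_self,
    Nat.mod_mod_of_dvd _ (dvd_pow_self b k.succ_ne_zero)]

theorem sum_mul_pow_eq_mod_pow_iff {b n : ℕ} {d : ℕ → ℕ} (hd : ∀ i < n, d i < b) (z : ℕ) :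
    ∑ i ∈ Finset.range n, d i * b ^ i = z % b ^ n ↔ ∀ i < n, d i = z / b ^ i % b := by
  have hb : 0 < b ^ n :=
    Nat.pow_pos_iff.2 (n.eq_zero_or_pos.symm.imp_left fun hn => (hd 0 hn).pos)
  let f : Fin n → Fin b := fun i => ⟨d i, hd i i.isLt⟩
  calc ∑ i ∈ Finset.range n, d i * b ^ i = z % b ^ n
      ↔ finFunctionFinEquiv f = ⟨z % b ^ n, Nat.mod_lt z hb⟩ := by
        rw [Fin.ext_iff, finFunctionFinEquiv_apply, Finset.sum_range]
    _ ↔ ∀ i : Fin n, d i = z % b ^ n / b ^ (i : ℕ) % b := by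
        simp only [← Equiv.eq_symm_apply, funext_iff, Fin.ext_iff,
          finFunctionFinEquiv_symm_apply_val, f]
    _ ↔ ∀ i < n, d i = z / b ^ i % b := by
        rw [Fin.forall_iff]
        exact forall₂_congr fun i hi => by rw [mod_pow_div_pow_mod hi]

theorem tcarry_le_one (m x y i : ℕ) : tcarry m x y i ≤ 1 := by
  unfold tcarry
  split_ifs <;> simp

theorem tcarry_le_tcarry {m m' i : ℕ} (h : i - m' ≤ i - m) (x y : ℕ) :
    tcarry m x y i ≤ tcarry m' x y i := by
  unfold tcarry
  split_ifs with hm hm'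
  · exact le_rfl
  · exact absurd (hm.imp fun j hj => ⟨h.trans hj.1, hj.2⟩) hm'
  · exact Nat.zero_le _
  · exact le_rfl

theorem tcarry_self_succ_eq_one_iff (x y i : ℕ) :
    tcarry (i + 1) x y (i + 1) = 1 ↔
      bitd x i = 1 ∧ bitd y i = 1 ∨ bitd x i + bitd y i = 1 ∧ tcarry i x y i = 1 := by
  simp only [tcarry, Nat.sub_self, Nat.zero_le, true_and, ite_eq_left_iff, zero_ne_one, imp_false,
    not_not]
  constructor
  · rintro ⟨j, hj, hx, hy, hprop⟩
    obtain hj | rfl := Nat.lt_succ_iff_lt_or_eq.mp hj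
    · exact .inr ⟨hprop i hj i.lt_succ_self, j, hj, hx, hy, fun k hjk hki =>
        hprop k hjk (hki.trans i.lt_succ_self)⟩
    · exact .inl ⟨hx, hy⟩
  · rintro (⟨hx, hy⟩ | ⟨hi, j, hj, hx, hy, hprop⟩)
    · exact ⟨i, i.lt_succ_self, hx, hy, fun k hik hki => by omega⟩
    · refine ⟨j, hj.trans i.lt_succ_self, hx, hy, fun k hjk hk => ?_⟩
      obtain hk | rfl := Nat.lt_succ_iff_lt_or_eq.mp hk
      exacts [hprop k hjk hk, hi]

theorem tcarry_self_eq_one_iff (x y i : ℕ) :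
    tcarry i x y i = 1 ↔ 2 ^ i ≤ x % 2 ^ i + y % 2 ^ i := by
  induction i with
  | zero => simp [tcarry, Nat.mod_one]
  | succ i ih =>
    have hx : x % 2 ^ i < 2 ^ i := Nat.mod_lt x (by positivity)
    have hy : y % 2 ^ i < 2 ^ i := Nat.mod_lt y (by positivity)
    rw [tcarry_self_succ_eq_one_iff, ih, Nat.mod_pow_succ, Nat.mod_pow_succ, bitd, bitd, pow_succ]
    obtain hbx | hbx := Nat.mod_two_eq_zero_or_one (x / 2 ^ i) <;>
    obtain hby | hby := Nat.mod_two_eq_zero_or_one (y / 2 ^ i) <;>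
    rw [hbx, hby] <;> omega

theorem tcarry_self (x y i : ℕ) :
    tcarry i x y i = if 2 ^ i ≤ x % 2 ^ i + y % 2 ^ i then 1 else 0 := by
  have hle := tcarry_le_one i x y i
  have hiff := tcarry_self_eq_one_iff x y i
  split_ifs <;> omega

theorem bitd_add (x y i : ℕ) :
    bitd (x + y) i = (bitd x i + bitd y i + tcarry i x y i) % 2 := by
  rw [tcarry_self, bitd, Nat.add_div (by positivity), bitd, bitd]
  omega

theorem tadd_eq_add_mod_iff (N m x y : ℕ) :
    tadd N m x y = (x + y) % 2 ^ N ↔ ∀ i < N, tcarry m x y i = tcarry i x y i := by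
  rw [tadd, sum_mul_pow_eq_mod_pow_iff fun i _ => Nat.mod_lt _ two_pos]
  refine forall₂_congr fun i _ => ?_
  have hm := tcarry_le_one m x y i
  have hi := tcarry_le_one i x y i
  rw [← bitd, bitd_add]
  omega

theorem tadd_eq_add_mod_of_le {N m m' x y : ℕ} (hmm : m ≤ m')
    (h : tadd N m x y = (x + y) % 2 ^ N) : tadd N m' x y = (x + y) % 2 ^ N := by
  rw [tadd_eq_add_mod_iff] at h ⊢
  refine fun i hi => le_antisymm (tcarry_le_tcarry (by simp) x y) ?_
  calc tcarry i x y i = tcarry m x y i := (h i hi).symm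
    _ ≤ tcarry m' x y i := tcarry_le_tcarry (Nat.sub_le_sub_left hmm i) x y

open Classical in
/-- the number of pairs of `N`-bit numbers on which truncated addition
agrees with ordinary addition is nondecreasing in the truncation parameter `m`;
hence the agreement probability `π_m(N)` is nondecreasing in `m`. -/
theorem card_agree_mono (N m m' : ℕ) (hN : 1 ≤ N) (hmm : m ≤ m') :
    ((Finset.range (2 ^ N) ×ˢ Finset.range (2 ^ N)).filter fun p =>
        tadd N m p.1 p.2 = (p.1 + p.2) % 2 ^ N).card ≤
      ((Finset.range (2 ^ N) ×ˢ Finset.range (2 ^ N)).filter fun p =>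
        tadd N m' p.1 p.2 = (p.1 + p.2) % 2 ^ N).card :=
  Finset.card_le_card (Finset.monotone_filter_right _ fun _ _ => tadd_eq_add_mod_of_le hmm)
end
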